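/- arXiv:1611.05427 — 3 statements merged into one kernel-verified Lean document; each statement's English description precedes it below -/
import Mathlib

section
/- Let ε_1 = ε_2 = −1, ε_3 = ε_4 = 1, let ξ ∈ ℝ, and for smooth functions v : ℂ⁴ → ℂ define ∂̄_j v = ∂v/∂z̄_j + ε_j ξ z_j v. Then for every fixed index k ∈ {1,2,3,4} and every smooth compactly supported v : ℂ⁴ → ℂ, ∑_{j ≠ k} ∫_{ℂ⁴} |∂̄_j v|² e^{|z|²} dλ(z) ≥ 2 ∫_{ℂ⁴} |v|² e^{|z|²} dλ(z). -/
open MeasureTheory Complex Finset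

noncomputable section

/-- Wirtinger derivative `∂v/∂z̄_j = (1/2)(∂/∂x_j + i ∂/∂y_j) v` on `ℂⁿ`. -/
def wbar {n : ℕ} (j : Fin n) (v : (Fin n → ℂ) → ℂ) (z : Fin n → ℂ) : ℂ :=
  (1 / 2 : ℂ) * (fderiv ℝ v z (Pi.single j 1) + Complex.I * fderiv ℝ v z (Pi.single j Complex.I))

/-- Wirtinger derivative `∂v/∂z_j = (1/2)(∂/∂x_j − i ∂/∂y_j) v` on `ℂⁿ`. -/
def whol {n : ℕ} (j : Fin n) (v : (Fin n → ℂ) → ℂ) (z : Fin n → ℂ) : ℂ :=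
  (1 / 2 : ℂ) * (fderiv ℝ v z (Pi.single j 1) - Complex.I * fderiv ℝ v z (Pi.single j Complex.I))

/-- The operator `∂̄_j v = ∂v/∂z̄_j + λ_j z_j v`. -/
def dbarOp {n : ℕ} (lam : Fin n → ℝ) (j : Fin n) (v : (Fin n → ℂ) → ℂ) (z : Fin n → ℂ) : ℂ :=
  wbar j v z + (lam j : ℂ) * z j * v z

/-- The operator `δ_j v = −∂v/∂z_j + λ_j z̄_j v − z̄_j v`. -/
def deltaOp {n : ℕ} (lam : Fin n → ℝ) (j : Fin n) (v : (Fin n → ℂ) → ℂ) (z : Fin n → ℂ) : ℂ :=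
  - whol j v z + (lam j : ℂ) * (starRingEnd ℂ) (z j) * v z - (starRingEnd ℂ) (z j) * v z

/-- The weight `e^{|z|²}`. -/
def wgt {n : ℕ} (z : Fin n → ℂ) : ℝ := Real.exp (∑ j, Complex.normSq (z j))

/-- The signs ε₁ = ε₂ = −1, ε₃ = ε₄ = 1. -/
def eps : Fin 4 → ℝ := ![-1, -1, 1, 1]

lemma two_le_smooth : (1 + 1 : WithTop ℕ∞) ≤ ((⊤ : ℕ∞) : WithTop ℕ∞) := by
  have h : ((1 + 1 : ℕ∞) : WithTop ℕ∞) ≤ ((⊤ : ℕ∞) : WithTop ℕ∞) := WithTop.coe_le_coe.2 le_top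
  exact h

lemma int_fderiv_zero {n : ℕ} (F : (Fin n → ℂ) → ℝ) (hF : ContDiff ℝ 1 F)
    (hc : HasCompactSupport F) (e : Fin n → ℂ) :
    Integrable (fun z => fderiv ℝ F z e) ∧ ∫ z, fderiv ℝ F z e = 0 := by
  have hcont : Continuous (fun z => fderiv ℝ F z e) :=
    (hF.continuous_fderiv one_ne_zero).clm_apply continuous_const
  have hi : Integrable (fun z => fderiv ℝ F z e) :=
    hcont.integrable_of_hasCompactSupport (hc.fderiv_apply (𝕜 := ℝ) e)
  refine ⟨hi, ?_⟩
  have h := integral_mul_fderiv_eq_neg_fderiv_mul_of_integrable (𝕜 := ℝ)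
    (μ := (volume : Measure (Fin n → ℂ))) (f := fun _ => (1 : ℝ)) (g := F) (v := e)
    (by simp) (by simpa using hi)
    (by simpa using hF.continuous.integrable_of_hasCompactSupport hc)
    (fun x _ => differentiableAt_const _)
    (fun x _ => hF.differentiable one_ne_zero x)
  simpa using h

lemma line_deriv {n : ℕ} {p : (Fin n → ℂ) → ℝ} (hp : ContDiff ℝ 1 p) (z e : Fin n → ℂ) :
    HasDerivAt (fun t : ℝ => p (z + t • e)) (fderiv ℝ p z e) 0 :=
  ((hp.differentiable one_ne_zero z).hasFDerivAt).hasLineDerivAt e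

lemma wgt_contDiff {n : ℕ} : ContDiff ℝ (⊤ : ℕ∞) (wgt : (Fin n → ℂ) → ℝ) := by
  unfold wgt
  simp only [Complex.normSq_apply]
  refine Real.contDiff_exp.comp (ContDiff.sum fun j _ => ?_)
  have h1 : ContDiff ℝ (⊤ : ℕ∞) (fun z : Fin n → ℂ => (z j).re) :=
    Complex.reCLM.contDiff.comp (contDiff_apply ℝ ℂ j)
  have h2 : ContDiff ℝ (⊤ : ℕ∞) (fun z : Fin n → ℂ => (z j).im) :=
    Complex.imCLM.contDiff.comp (contDiff_apply ℝ ℂ j)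
  exact (h1.mul h1).add (h2.mul h2)

lemma re_line {n : ℕ} (j : Fin n) (z : Fin n → ℂ) (c : ℂ) :
    HasDerivAt (fun t : ℝ => ((z + t • (Pi.single j c : Fin n → ℂ)) j).re) c.re 0 := by
  have : (fun t : ℝ => ((z + t • (Pi.single j c : Fin n → ℂ)) j).re) =
      fun t : ℝ => (z j).re + t * c.re := by
    funext t; simp
  rw [this]
  simpa using ((hasDerivAt_id (0 : ℝ)).mul_const c.re).const_add (z j).re

lemma im_line {n : ℕ} (j : Fin n) (z : Fin n → ℂ) (c : ℂ) :
    HasDerivAt (fun t : ℝ => ((z + t • (Pi.single j c : Fin n → ℂ)) j).im) c.im 0 := by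
  have : (fun t : ℝ => ((z + t • (Pi.single j c : Fin n → ℂ)) j).im) =
      fun t : ℝ => (z j).im + t * c.im := by
    funext t; simp
  rw [this]
  simpa using ((hasDerivAt_id (0 : ℝ)).mul_const c.im).const_add (z j).im

lemma wgt_line {n : ℕ} (j : Fin n) (z : Fin n → ℂ) (c : ℂ) :
    HasDerivAt (fun t : ℝ => wgt (z + t • (Pi.single j c : Fin n → ℂ)))
      (wgt z * (2 * ((z j).re * c.re + (z j).im * c.im))) 0 := by
  unfold wgt
  have h : HasDerivAt (fun t : ℝ => ∑ i, Complex.normSq ((z + t • (Pi.single j c : Fin n → ℂ)) i))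
      (∑ i, if i = j then 2 * ((z j).re * c.re + (z j).im * c.im) else 0) 0 := by
    refine HasDerivAt.fun_sum fun i _ => ?_
    by_cases hij : i = j
    · subst hij
      simp only [Complex.normSq_apply, if_true]
      have h1 := re_line i z c
      have h2 := im_line i z c
      have h3 := (h1.mul h1).add (h2.mul h2)
      refine h3.congr_deriv ?_
      simp only [zero_smul, add_zero]
      ring
    · simp only [hij, if_false]
      have : (fun t : ℝ => Complex.normSq ((z + t • (Pi.single j c : Fin n → ℂ)) i)) =
        fun _ => Complex.normSq (z i) := by
        funext t; simp [Pi.single_eq_of_ne hij]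
      rw [this]
      exact hasDerivAt_const _ _
  have h3 := h.exp
  simpa using h3

lemma snd_symm {n : ℕ} {p : (Fin n → ℂ) → ℝ} (hp : ContDiff ℝ (⊤ : ℕ∞) p) (z e f : Fin n → ℂ) :
    fderiv ℝ (fun y => fderiv ℝ p y e) z f = fderiv ℝ (fun y => fderiv ℝ p y f) z e := by
  have hd : DifferentiableAt ℝ (fderiv ℝ p) z :=
    ((hp.fderiv_right (m := 1) (two_le_smooth)).differentiable one_ne_zero) z
  have hs : IsSymmSndFDerivAt ℝ p z :=
    (hp.contDiffAt).isSymmSndFDerivAt (by simpa [one_add_one_eq_two] using two_le_smooth)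
  rw [fderiv_clm_apply hd (differentiableAt_const _), fderiv_clm_apply hd (differentiableAt_const _)]
  simp
  exact hs f e

lemma one_estimate {n : ℕ} (lam : Fin n → ℝ) (j : Fin n)
    (v : (Fin n → ℂ) → ℂ) (hv : ContDiff ℝ (⊤ : ℕ∞) v) (hvcs : HasCompactSupport v) :
    (1 - 2 * lam j) * ∫ z : Fin n → ℂ, ‖v z‖ ^ 2 * wgt z
      ≤ ∫ z : Fin n → ℂ, ‖dbarOp lam j v z‖ ^ 2 * wgt z := by
  set e1 : Fin n → ℂ := Pi.single j 1 with he1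
  set e2 : Fin n → ℂ := Pi.single j Complex.I with he2
  set p : (Fin n → ℂ) → ℝ := fun z => (v z).re with hpdef
  set q : (Fin n → ℂ) → ℝ := fun z => (v z).im with hqdef
  have hp : ContDiff ℝ (⊤ : ℕ∞) p := Complex.reCLM.contDiff.comp hv
  have hq : ContDiff ℝ (⊤ : ℕ∞) q := Complex.imCLM.contDiff.comp hv
  have hvd : ∀ z, DifferentiableAt ℝ v z := hv.differentiable (by simp)
  have hpf : ∀ z e, fderiv ℝ p z e = (fderiv ℝ v z e).re := fun z e => by
    have := (Complex.reCLM.hasFDerivAt.comp z (hvd z).hasFDerivAt).fderiv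
    change fderiv ℝ (Complex.reCLM ∘ v) z e = _
    rw [this]; rfl
  have hqf : ∀ z e, fderiv ℝ q z e = (fderiv ℝ v z e).im := fun z e => by
    have := (Complex.imCLM.hasFDerivAt.comp z (hvd z).hasFDerivAt).fderiv
    change fderiv ℝ (Complex.imCLM ∘ v) z e = _
    rw [this]; rfl
  have hD : ∀ {f : (Fin n → ℂ) → ℝ}, ContDiff ℝ (⊤ : ℕ∞) f → ∀ e,
      ContDiff ℝ 1 (fun z => fderiv ℝ f z e) := fun hf e =>
    (hf.fderiv_right (m := 1) two_le_smooth).clm_apply contDiff_const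
  have h1le : (1 : WithTop ℕ∞) ≤ ((⊤ : ℕ∞) : WithTop ℕ∞) := by exact_mod_cast le_top
  have hp1 := hp.of_le h1le
  have hq1 := hq.of_le h1le
  have hw1 := (wgt_contDiff (n := n)).of_le h1le
  have hre : ContDiff ℝ 1 (fun z : Fin n → ℂ => (z j).re) :=
    Complex.reCLM.contDiff.comp (contDiff_apply ℝ ℂ j)
  have him : ContDiff ℝ 1 (fun z : Fin n → ℂ => (z j).im) :=
    Complex.imCLM.contDiff.comp (contDiff_apply ℝ ℂ j)
  have hv0 : ∀ z, z ∉ tsupport v → v z = 0 := fun z hz => image_eq_zero_of_notMem_tsupport hz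
  have hfv0 : ∀ z, z ∉ tsupport v → fderiv ℝ v z = 0 := fun z hz =>
    image_eq_zero_of_notMem_tsupport (fun h => hz (tsupport_fderiv_subset ℝ h))
  set b : ℝ := lam j - 1 / 2 with hb
  set F1 : (Fin n → ℂ) → ℝ := fun z => wgt z * ((1/2) * (q z * fderiv ℝ p z e2 - p z * fderiv ℝ q z e2)
    + b * (z j).re * (p z * p z + q z * q z)) with hF1
  set F2 : (Fin n → ℂ) → ℝ := fun z => wgt z * ((-1/2) * (q z * fderiv ℝ p z e1 - p z * fderiv ℝ q z e1)
    + b * (z j).im * (p z * p z + q z * q z)) with hF2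
  have hF1c : ContDiff ℝ 1 F1 :=
    hw1.mul ((contDiff_const.mul ((hq1.mul (hD hp e2)).sub (hp1.mul (hD hq e2)))).add
      ((contDiff_const.mul hre).mul ((hp1.mul hp1).add (hq1.mul hq1))))
  have hF2c : ContDiff ℝ 1 F2 :=
    hw1.mul ((contDiff_const.mul ((hq1.mul (hD hp e1)).sub (hp1.mul (hD hq e1)))).add
      ((contDiff_const.mul him).mul ((hp1.mul hp1).add (hq1.mul hq1))))
  have hF1s : HasCompactSupport F1 := HasCompactSupport.intro hvcs fun z hz => by
    simp [hF1, hpdef, hqdef, hv0 z hz]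
  have hF2s : HasCompactSupport F2 := HasCompactSupport.intro hvcs fun z hz => by
    simp [hF2, hpdef, hqdef, hv0 z hz]
  obtain ⟨i1, z1⟩ := int_fderiv_zero F1 hF1c hF1s e1
  obtain ⟨i2, z2⟩ := int_fderiv_zero F2 hF2c hF2s e2
  have hwc : Continuous (wgt : (Fin n → ℂ) → ℝ) := wgt_contDiff.continuous
  have hfc : ∀ e, Continuous (fun z => fderiv ℝ v z e) := fun e =>
    (hv.continuous_fderiv (by simp)).clm_apply continuous_const
  have hvc := hv.continuous
  have hDc : Continuous (dbarOp lam j v) := by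
    have a1 := hfc (Pi.single j 1)
    have a2 := hfc (Pi.single j Complex.I)
    unfold dbarOp wbar
    fun_prop
  have hEc : Continuous (deltaOp lam j v) := by
    have a1 := hfc (Pi.single j 1)
    have a2 := hfc (Pi.single j Complex.I)
    have a3 : Continuous (fun z : Fin n → ℂ => (starRingEnd ℂ) (z j)) :=
      Complex.continuous_conj.comp (continuous_apply j)
    unfold deltaOp whol
    fun_prop
  have hint : ∀ g : (Fin n → ℂ) → ℂ, Continuous g → (∀ z, z ∉ tsupport v → g z = 0) →
      Integrable (fun z => ‖g z‖ ^ 2 * wgt z) := fun g hg h0 => by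
    refine Continuous.integrable_of_hasCompactSupport (by fun_prop)
      (HasCompactSupport.intro hvcs fun z hz => by simp [h0 z hz])
  have iv := hint v hvc hv0
  have iD := hint _ hDc fun z hz => by simp [dbarOp, wbar, hv0 z hz, hfv0 z hz]
  have iE := hint _ hEc fun z hz => by simp [deltaOp, whol, hv0 z hz, hfv0 z hz]
  have key : ∀ z, ‖dbarOp lam j v z‖ ^ 2 * wgt z = (1 - 2 * lam j) * (‖v z‖ ^ 2 * wgt z)
      + ‖deltaOp lam j v z‖ ^ 2 * wgt z + (fderiv ℝ F1 z e1 + fderiv ℝ F2 z e2) := by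
    intro z
    have d1 := line_deriv hF1c z e1
    have d2 := line_deriv hF2c z e2
    have c1 := (wgt_line j z 1).mul (((((line_deriv hq1 z e1).mul (line_deriv (hD hp e2) z e1)).sub
      ((line_deriv hp1 z e1).mul (line_deriv (hD hq e2) z e1))).const_mul (1/2)).add
      (((re_line j z 1).const_mul b).mul (((line_deriv hp1 z e1).mul (line_deriv hp1 z e1)).add
        ((line_deriv hq1 z e1).mul (line_deriv hq1 z e1)))))
    have c2 := (wgt_line j z Complex.I).mul (((((line_deriv hq1 z e2).mul (line_deriv (hD hp e1) z e2)).sub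
      ((line_deriv hp1 z e2).mul (line_deriv (hD hq e1) z e2))).const_mul (-1/2)).add
      (((im_line j z Complex.I).const_mul b).mul (((line_deriv hp1 z e2).mul (line_deriv hp1 z e2)).add
        ((line_deriv hq1 z e2).mul (line_deriv hq1 z e2)))))
    have u1 := d1.unique c1
    have u2 := d2.unique c2
    rw [u1, u2, snd_symm hp z e1 e2, snd_symm hq z e1 e2]
    simp only [Pi.add_apply, Pi.mul_apply, Pi.sub_apply, zero_smul, add_zero, hpf, hqf,
      Complex.sq_norm, Complex.normSq_apply]
    simp only [dbarOp, deltaOp, wbar, whol, ← he1, ← he2]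
    simp
    simp only [hpdef, hqdef, hb]
    ring
  have hsum : ∫ z, ‖dbarOp lam j v z‖ ^ 2 * wgt z = (1 - 2 * lam j) * (∫ z, ‖v z‖ ^ 2 * wgt z)
      + ∫ z, ‖deltaOp lam j v z‖ ^ 2 * wgt z := by
    simp_rw [key]
    have s1 := integral_add ((iv.const_mul (1 - 2 * lam j)).add iE) (i1.add i2)
    simp only [Pi.add_apply] at s1
    rw [s1, integral_add (iv.const_mul _) iE, integral_add i1 i2, z1, z2, integral_const_mul]
    simp
  rw [hsum]
  have : 0 ≤ ∫ z, ‖deltaOp lam j v z‖ ^ 2 * wgt z :=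
    integral_nonneg fun z => mul_nonneg (sq_nonneg _) (Real.exp_pos _).le
  linarith

theorem basic_estimate_off_k (ξ : ℝ) (k : Fin 4)
    (v : (Fin 4 → ℂ) → ℂ) (hv : ContDiff ℝ (⊤ : ℕ∞) v) (hvcs : HasCompactSupport v) :
    2 * ∫ z : Fin 4 → ℂ, ‖v z‖ ^ 2 * wgt z
      ≤ ∑ j ∈ Finset.univ.erase k,
          ∫ z : Fin 4 → ℂ, ‖dbarOp (fun i => eps i * ξ) j v z‖ ^ 2 * wgt z := by
  have E := fun j => one_estimate (fun i => eps i * ξ) j v hv hvcs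
  have N : ∀ j : Fin 4, 0 ≤ ∫ z : Fin 4 → ℂ, ‖dbarOp (fun i => eps i * ξ) j v z‖ ^ 2 * wgt z :=
    fun j => integral_nonneg fun z => mul_nonneg (sq_nonneg _) (Real.exp_pos _).le
  have T : ∑ j ∈ Finset.univ.erase k,
        ∫ z : Fin 4 → ℂ, ‖dbarOp (fun i => eps i * ξ) j v z‖ ^ 2 * wgt z =
      ∑ j, (∫ z : Fin 4 → ℂ, ‖dbarOp (fun i => eps i * ξ) j v z‖ ^ 2 * wgt z) -
        ∫ z : Fin 4 → ℂ, ‖dbarOp (fun i => eps i * ξ) k v z‖ ^ 2 * wgt z := by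
    rw [← Finset.sum_erase_add _ _ (Finset.mem_univ k)]; ring
  rw [T, Fin.sum_univ_four]
  have E0 := E 0
  have E1 := E 1
  have E2 := E 2
  have E3 := E 3
  have e0 : eps 0 = -1 := rfl
  have e1 : eps 1 = -1 := rfl
  have e2 : eps 2 = 1 := rfl
  have e3 : eps 3 = 1 := rfl
  simp only [e0, e1, e2, e3] at E0 E1 E2 E3
  have N0 := N 0
  have N1 := N 1
  have N2 := N 2
  have N3 := N 3
  generalize (fun i => eps i * ξ) = L at *
  fin_cases k <;> simp only [Fin.zero_eta, Fin.mk_one, Fin.reduceFinMk] <;> linarith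
end
end

section
/- Let ε_1 = ε_2 = −1, ε_3 = ε_4 = 1, and on ℂ⁴ × ℝ with coordinates (z, x) consider the vector fields L̄_j = ∂/∂z̄_j − i ε_j z_j ∂/∂x, j = 1,...,4. Then for every smooth compactly supported u : ℂ⁴ × ℝ → ℂ, 4 ∫_{ℂ⁴×ℝ} |u|² e^{|z|²} dλ ≤ ∑_{j=1}^4 ∫_{ℂ⁴×ℝ} |L̄_j u|² e^{|z|²} dλ. -/
open MeasureTheory Complex Finset

noncomputable section

/-- Wirtinger derivative `∂u/∂z̄_j` in the `z` variables on `ℂ⁴ × ℝ`. -/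
def wbarP (j : Fin 4) (u : (Fin 4 → ℂ) × ℝ → ℂ) (p : (Fin 4 → ℂ) × ℝ) : ℂ :=
  (1 / 2 : ℂ) * (fderiv ℝ u p (Pi.single j 1, 0)
    + Complex.I * fderiv ℝ u p (Pi.single j Complex.I, 0))

/-- Wirtinger derivative `∂u/∂z_j` in the `z` variables on `ℂ⁴ × ℝ`. -/
def wholP (j : Fin 4) (u : (Fin 4 → ℂ) × ℝ → ℂ) (p : (Fin 4 → ℂ) × ℝ) : ℂ :=
  (1 / 2 : ℂ) * (fderiv ℝ u p (Pi.single j 1, 0)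
    - Complex.I * fderiv ℝ u p (Pi.single j Complex.I, 0))

/-- The derivative `∂u/∂x` in the real variable on `ℂ⁴ × ℝ`. -/
def dxP (u : (Fin 4 → ℂ) × ℝ → ℂ) (p : (Fin 4 → ℂ) × ℝ) : ℂ :=
  fderiv ℝ u p (0, 1)

/-- The vector field `L̄_j = ∂/∂z̄_j − i ε_j z_j ∂/∂x`. -/
def Lbar (j : Fin 4) (u : (Fin 4 → ℂ) × ℝ → ℂ) (p : (Fin 4 → ℂ) × ℝ) : ℂ :=
  wbarP j u p - Complex.I * (eps j : ℂ) * p.1 j * dxP u p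

/-- The vector field `L_j = ∂/∂z_j + i ε_j z̄_j ∂/∂x`. -/
def Lhol (j : Fin 4) (u : (Fin 4 → ℂ) × ℝ → ℂ) (p : (Fin 4 → ℂ) × ℝ) : ℂ :=
  wholP j u p + Complex.I * (eps j : ℂ) * (starRingEnd ℂ) (p.1 j) * dxP u p

/-- The weight `e^{|z|²}`. -/
def wgtP (p : (Fin 4 → ℂ) × ℝ) : ℝ := Real.exp (∑ j, Complex.normSq (p.1 j))

abbrev EE := (Fin 4 → ℂ) × ℝ

lemma int_fderiv_zero_s8 (F : EE → ℂ) (hF : ContDiff ℝ 1 F) (hc : HasCompactSupport F) (v : EE) :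
    ∫ p, fderiv ℝ F p v = 0 := by
  haveI : (volume : Measure EE).IsAddHaarMeasure :=
    Measure.prod.instIsAddHaarMeasure (volume : Measure (Fin 4 → ℂ)) (volume : Measure ℝ)
  have h := integral_mul_fderiv_eq_neg_fderiv_mul_of_integrable (𝕜 := ℂ) (μ := (volume : Measure EE))
    (f := fun _ => (1 : ℂ)) (g := F) (v := v) (by simp)
    (by
      simp only [one_mul]
      exact ((hF.continuous_fderiv_apply one_ne_zero).comp
        (continuous_id.prodMk continuous_const)).integrable_of_hasCompactSupport
          (hc.fderiv_apply ℝ v))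
    (by simpa using hF.continuous.integrable_of_hasCompactSupport hc)
    (fun _ _ => differentiableAt_const _) (fun x _ => hF.differentiable one_ne_zero x)
  simpa using h

lemma hasF_coord (j : Fin 4) (p : EE) :
    HasFDerivAt (𝕜 := ℝ) (fun q : EE => q.1 j)
      ((ContinuousLinearMap.proj (R := ℝ) (φ := fun _ : Fin 4 => ℂ) j).comp
        (ContinuousLinearMap.fst ℝ (Fin 4 → ℂ) ℝ)) p :=
  ((ContinuousLinearMap.proj (R := ℝ) (φ := fun _ : Fin 4 => ℂ) j).comp
        (ContinuousLinearMap.fst ℝ (Fin 4 → ℂ) ℝ)).hasFDerivAt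

lemma cd_coord (j : Fin 4) {n} : ContDiff ℝ n (fun q : EE => q.1 j) := by fun_prop

lemma cd_conj {f : EE → ℂ} {n} (hf : ContDiff ℝ n f) :
    ContDiff ℝ n (fun q : EE => (starRingEnd ℂ) (f q)) :=
  (Complex.conjCLE.contDiff).comp hf

lemma fd_conj {f : EE → ℂ} {p : EE} (hf : DifferentiableAt ℝ f p) (v : EE) :
    fderiv ℝ (fun q : EE => (starRingEnd ℂ) (f q)) p v = (starRingEnd ℂ) (fderiv ℝ f p v) := by
  have := (Complex.conjCLE.toContinuousLinearMap.hasFDerivAt).comp p hf.hasFDerivAt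
  have h2 := this.fderiv
  have h3 := congrArg (fun L => L v) h2
  simpa [Function.comp_def] using h3

lemma fd_mul {f g : EE → ℂ} {p : EE} (hf : DifferentiableAt ℝ f p) (hg : DifferentiableAt ℝ g p)
    (v : EE) :
    fderiv ℝ (fun q : EE => f q * g q) p v = fderiv ℝ f p v * g p + f p * fderiv ℝ g p v := by
  rw [fderiv_fun_mul hf hg]
  simp; ring

lemma Lbar_mul (j : Fin 4) {f g : EE → ℂ} {p : EE} (hf : DifferentiableAt ℝ f p)
    (hg : DifferentiableAt ℝ g p) :
    Lbar j (fun q => f q * g q) p = Lbar j f p * g p + f p * Lbar j g p := by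
  simp only [Lbar, wbarP, dxP, fd_mul hf hg]; ring

lemma Lbar_add (j : Fin 4) {f g : EE → ℂ} {p : EE} (hf : DifferentiableAt ℝ f p)
    (hg : DifferentiableAt ℝ g p) :
    Lbar j (fun q => f q + g q) p = Lbar j f p + Lbar j g p := by
  simp only [Lbar, wbarP, dxP, fderiv_fun_add hf hg, _root_.add_apply]; ring

lemma Lbar_conj (j : Fin 4) {f : EE → ℂ} {p : EE} (hf : DifferentiableAt ℝ f p) :
    Lbar j (fun q => (starRingEnd ℂ) (f q)) p = (starRingEnd ℂ) (Lhol j f p) := by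
  simp only [Lbar, Lhol, wbarP, wholP, dxP, fd_conj hf]
  have h2 : (starRingEnd ℂ) (1 / 2 : ℂ) = 1 / 2 := by simp [Complex.ext_iff]
  simp only [map_add, map_sub, map_mul, h2, Complex.conj_I, Complex.conj_ofReal, Complex.conj_conj]
  ring

lemma fd_coord (j : Fin 4) (p v : EE) : fderiv ℝ (fun q : EE => q.1 j) p v = v.1 j := by
  rw [(hasF_coord j p).fderiv]; simp

lemma Lbar_conj_coord (j : Fin 4) (p : EE) :
    Lbar j (fun q => (starRingEnd ℂ) (q.1 j)) p = 1 := by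
  have hd : DifferentiableAt ℝ (fun q : EE => q.1 j) p := (hasF_coord j p).differentiableAt
  simp only [Lbar, wbarP, dxP, fd_conj hd, fd_coord]
  simp
  norm_num

def wC (p : EE) : ℂ := Complex.exp (∑ j, p.1 j * (starRingEnd ℂ) (p.1 j))

lemma wC_eq (p : EE) : wC p = ((wgtP p : ℝ) : ℂ) := by
  simp [wC, wgtP, Complex.mul_conj]

lemma cd_wC {n} : ContDiff ℝ n wC := by
  unfold wC
  apply ContDiff.cexp
  apply ContDiff.sum
  intro i _
  exact (cd_coord i).mul (cd_conj (cd_coord i))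

lemma Lbar_wC (j : Fin 4) (p : EE) : Lbar j wC p = p.1 j * wC p := by
  have key : ∀ v : EE, fderiv ℝ wC p v =
      wC p * ∑ i, (v.1 i * (starRingEnd ℂ) (p.1 i) + p.1 i * (starRingEnd ℂ) (v.1 i)) := by
    intro v
    have hd : ∀ i, DifferentiableAt ℝ (fun q : EE => q.1 i) p := fun i =>
      (hasF_coord i p).differentiableAt
    have hd' : ∀ i, DifferentiableAt ℝ (fun q : EE => (starRingEnd ℂ) (q.1 i)) p := fun i =>
      (cd_conj (n := 1) (cd_coord i)).differentiable one_ne_zero p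
    have hs : DifferentiableAt ℝ (fun q : EE => ∑ i, q.1 i * (starRingEnd ℂ) (q.1 i)) p :=
      DifferentiableAt.fun_sum fun i _ => (hd i).mul (hd' i)
    have h := (hs.hasFDerivAt.cexp).fderiv
    have h3 := congrArg (fun L => L v) h
    change fderiv ℝ wC p v = _ at h3
    rw [h3, fderiv_fun_sum (A := fun i (q : EE) => q.1 i * (starRingEnd ℂ) (q.1 i))
      (fun i _ => (hd i).mul (hd' i))]
    simp only [ContinuousLinearMap.smul_apply, ContinuousLinearMap.sum_apply, smul_eq_mul, wC]
    congr 1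
    refine Finset.sum_congr rfl fun i _ => ?_
    rw [fd_mul (hd i) (hd' i), fd_conj (hd i), fd_coord]
  simp only [Lbar, wbarP, dxP, key]
  have e1 : ∀ c : ℂ, (∑ i, ((Pi.single j c : Fin 4 → ℂ) i * (starRingEnd ℂ) (p.1 i)
      + p.1 i * (starRingEnd ℂ) ((Pi.single j c : Fin 4 → ℂ) i)))
      = c * (starRingEnd ℂ) (p.1 j) + p.1 j * (starRingEnd ℂ) c := by
    intro c
    rw [Finset.sum_eq_single j]
    · simp
    · intro b _ hb; simp [hb]
    · simp
  rw [e1, e1]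
  simp
  linear_combination (-(1/2 : ℂ) * wC p * p.1 j + (1/2 : ℂ) * wC p * (starRingEnd ℂ) (p.1 j)) * Complex.I_mul_I

lemma cd_fd {f : EE → ℂ} (hf : ContDiff ℝ (⊤ : ℕ∞) f) (v : EE) :
    ContDiff ℝ (⊤ : ℕ∞) (fun q => fderiv ℝ f q v) :=
  (hf.fderiv_right (m := (⊤ : ℕ∞)) (by simp)).clm_apply contDiff_const

lemma cd_Lbar (j : Fin 4) {f : EE → ℂ} (hf : ContDiff ℝ (⊤ : ℕ∞) f) :
    ContDiff ℝ (⊤ : ℕ∞) (Lbar j f) := by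
  unfold Lbar wbarP dxP
  exact (contDiff_const.mul ((cd_fd hf _).add (contDiff_const.mul (cd_fd hf _)))).sub
    ((contDiff_const.mul (cd_coord j)).mul (cd_fd hf _))

lemma cd_Lhol (j : Fin 4) {f : EE → ℂ} (hf : ContDiff ℝ (⊤ : ℕ∞) f) :
    ContDiff ℝ (⊤ : ℕ∞) (Lhol j f) := by
  unfold Lhol wholP dxP
  exact (contDiff_const.mul ((cd_fd hf _).sub (contDiff_const.mul (cd_fd hf _)))).add
    ((contDiff_const.mul (cd_conj (cd_coord j))).mul (cd_fd hf _))

lemma fd_comm {f : EE → ℂ} (hf : ContDiff ℝ (⊤ : ℕ∞) f) (p v w : EE) :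
    fderiv ℝ (fun q => fderiv ℝ f q v) p w = fderiv ℝ (fun q => fderiv ℝ f q w) p v := by
  have hd : DifferentiableAt ℝ (fderiv ℝ f) p :=
    (hf.fderiv_right (m := (⊤ : ℕ∞)) (by simp)).differentiable (by simp) p
  have e : ∀ a b : EE, fderiv ℝ (fun q => fderiv ℝ f q a) p b = fderiv ℝ (fderiv ℝ f) p b a := by
    intro a b
    rw [fderiv_clm_apply hd (differentiableAt_const _)]
    simp
  rw [e, e]
  exact (hf.contDiffAt.isSymmSndFDerivAt (by simp; exact WithTop.coe_le_coe.2 (le_top : (2 : ℕ∞) ≤ ⊤))).eq _ _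

lemma fd_Lbar (j : Fin 4) {f : EE → ℂ} (hf : ContDiff ℝ (⊤ : ℕ∞) f) (p v : EE) :
    fderiv ℝ (Lbar j f) p v = (1 / 2 : ℂ) * (fderiv ℝ (fun q => fderiv ℝ f q (Pi.single j 1, 0)) p v
    + Complex.I * fderiv ℝ (fun q => fderiv ℝ f q (Pi.single j Complex.I, 0)) p v)
    - Complex.I * (eps j : ℂ) * (v.1 j * fderiv ℝ f p (0, 1)
      + p.1 j * fderiv ℝ (fun q => fderiv ℝ f q (0, 1)) p v) := by
  have hd : ∀ w : EE, DifferentiableAt ℝ (fun q => fderiv ℝ f q w) p := fun w =>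
    (cd_fd hf w).differentiable (by simp) p
  have h := ((((hd (Pi.single j 1, 0)).hasFDerivAt.add
    ((hd (Pi.single j Complex.I, 0)).hasFDerivAt.const_mul Complex.I)).const_mul (1/2 : ℂ)).sub
    (((hasF_coord j p).const_mul (Complex.I * (eps j : ℂ))).mul (hd (0,1)).hasFDerivAt)).fderiv
  have h3 := congrArg (fun L => L v) h
  change fderiv ℝ (Lbar j f) p v = _ at h3
  rw [h3]
  simp
  ring

lemma fd_Lhol (j : Fin 4) {f : EE → ℂ} (hf : ContDiff ℝ (⊤ : ℕ∞) f) (p v : EE) :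
    fderiv ℝ (Lhol j f) p v = (1 / 2 : ℂ) * (fderiv ℝ (fun q => fderiv ℝ f q (Pi.single j 1, 0)) p v
    - Complex.I * fderiv ℝ (fun q => fderiv ℝ f q (Pi.single j Complex.I, 0)) p v)
    + Complex.I * (eps j : ℂ) * ((starRingEnd ℂ) (v.1 j) * fderiv ℝ f p (0, 1)
      + (starRingEnd ℂ) (p.1 j) * fderiv ℝ (fun q => fderiv ℝ f q (0, 1)) p v) := by
  have hd : ∀ w : EE, DifferentiableAt ℝ (fun q => fderiv ℝ f q w) p := fun w =>
    (cd_fd hf w).differentiable (by simp) p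
  have hc : DifferentiableAt ℝ (fun q : EE => (starRingEnd ℂ) (q.1 j)) p :=
      (cd_conj (n := 1) (cd_coord j)).differentiable one_ne_zero p
  have h := ((((hd (Pi.single j 1, 0)).hasFDerivAt.sub
    ((hd (Pi.single j Complex.I, 0)).hasFDerivAt.const_mul Complex.I)).const_mul (1/2 : ℂ)).add
    ((hc.hasFDerivAt.const_mul (Complex.I * (eps j : ℂ))).mul (hd (0,1)).hasFDerivAt)).fderiv
  have h3 := congrArg (fun L => L v) h
  change fderiv ℝ (Lhol j f) p v = _ at h3
  rw [h3]
  simp [fd_conj (hasF_coord j p).differentiableAt, fd_coord]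
  ring

lemma comm_L (j : Fin 4) {f : EE → ℂ} (hf : ContDiff ℝ (⊤ : ℕ∞) f) (p : EE) :
    Lbar j (Lhol j f) p = Lhol j (Lbar j f) p + 2 * Complex.I * (eps j : ℂ) * dxP f p := by
  simp only [Lbar.eq_1 j (Lhol j f), Lhol.eq_1 j (Lbar j f), wbarP, wholP, dxP,
    fd_Lbar j hf, fd_Lhol j hf]
  rw [fd_comm hf p (Pi.single j Complex.I, 0) (Pi.single j 1, 0),
    fd_comm hf p (0, 1) (Pi.single j 1, 0), fd_comm hf p (0, 1) (Pi.single j Complex.I, 0)]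
  simp
  ring_nf
  simp only [Complex.I_sq, show Complex.I ^ 3 = -Complex.I by rw [pow_succ, Complex.I_sq]; ring]
  ring

lemma int_Lbar_zero (j : Fin 4) {F : EE → ℂ} (hF : ContDiff ℝ (⊤ : ℕ∞) F)
    (hc : HasCompactSupport F) : ∫ p, Lbar j F p = 0 := by
  have h1 : ContDiff ℝ 1 F := hF.of_le (by exact_mod_cast le_top)
  have hz : ContDiff ℝ 1 (fun q : EE => q.1 j * F q) := (cd_coord j).mul h1
  have hzc : HasCompactSupport (fun q : EE => q.1 j * F q) := hc.mul_left
  have e : ∀ p, Lbar j F p = (1/2 : ℂ) * fderiv ℝ F p (Pi.single j 1, 0)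
      + (1/2 * Complex.I : ℂ) * fderiv ℝ F p (Pi.single j Complex.I, 0)
      - Complex.I * (eps j : ℂ) * fderiv ℝ (fun q : EE => q.1 j * F q) p (0, 1) := by
    intro p
    rw [fd_mul (hasF_coord j p).differentiableAt (h1.differentiable one_ne_zero p), fd_coord]
    simp only [Lbar, wbarP, dxP]
    simp
    ring
  have hi : ∀ (G : EE → ℂ), ContDiff ℝ 1 G → HasCompactSupport G → ∀ v,
      Integrable (fun p => fderiv ℝ G p v) := fun G hG hGc v =>
    ((hG.continuous_fderiv_apply one_ne_zero).comp
        (continuous_id.prodMk continuous_const)).integrable_of_hasCompactSupport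
          (hGc.fderiv_apply ℝ v)
  simp_rw [e]
  rw [integral_sub, integral_add]
  · simp only [integral_const_mul, int_fderiv_zero_s8 F h1 hc, int_fderiv_zero_s8 _ hz hzc]
    simp
  · exact (hi F h1 hc _).const_mul _
  · exact (hi F h1 hc _).const_mul _
  · exact ((hi F h1 hc _).const_mul _).add ((hi F h1 hc _).const_mul _)
  · exact (hi _ hz hzc _).const_mul _

def del (j : Fin 4) (f : EE → ℂ) (p : EE) : ℂ := Lhol j f p + (starRingEnd ℂ) (p.1 j) * f p

lemma cd_del (j : Fin 4) {f : EE → ℂ} (hf : ContDiff ℝ (⊤ : ℕ∞) f) :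
    ContDiff ℝ (⊤ : ℕ∞) (del j f) :=
  (cd_Lhol j hf).add ((cd_conj (cd_coord j)).mul hf)

lemma Lbar_del (j : Fin 4) {f : EE → ℂ} (hf : ContDiff ℝ (⊤ : ℕ∞) f) (p : EE) :
    Lbar j (del j f) p = del j (Lbar j f) p + 2 * Complex.I * (eps j : ℂ) * dxP f p + f p := by
  have hc : DifferentiableAt ℝ (fun q : EE => (starRingEnd ℂ) (q.1 j)) p :=
      (cd_conj (n := 1) (cd_coord j)).differentiable one_ne_zero p
  have hfd := hf.differentiable (by simp) p
  have := Lbar_add j ((cd_Lhol j hf).differentiable (by simp) p) (hc.mul hfd)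
  change Lbar j (del j f) p = _ at this
  rw [this]
  have h2 := Lbar_mul j hc hfd
  change Lbar j ((fun q : EE => (starRingEnd ℂ) (q.1 j)) * f) p = _ at h2
  rw [h2, comm_L j hf, Lbar_conj_coord]
  simp only [del]
  ring

/-- integrand of the integration by parts formula -/
lemma Lbar_triple (j : Fin 4) {f g : EE → ℂ} (hf : ContDiff ℝ (⊤ : ℕ∞) f)
    (hg : ContDiff ℝ (⊤ : ℕ∞) g) (p : EE) :
    Lbar j (fun q => f q * (starRingEnd ℂ) (g q) * wC q) p
      = (Lbar j f p * (starRingEnd ℂ) (g p) + f p * (starRingEnd ℂ) (del j g p)) * wC p := by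
  have hfd := hf.differentiable (by simp) p
  have hgd := hg.differentiable (by simp) p
  have hgc := (cd_conj hg).differentiable (by simp) p
  have hw := (cd_wC (n := 1)).differentiable one_ne_zero p
  rw [Lbar_mul j (f := fun q => f q * (starRingEnd ℂ) (g q)) (hfd.mul hgc) hw,
    Lbar_mul j hfd hgc, Lbar_conj j hgd, Lbar_wC]
  simp only [del, map_add, map_mul, Complex.conj_conj]
  ring

lemma zero_off {u : EE → ℂ} {p : EE} (h : p ∉ tsupport u) : u p = 0 ∧ fderiv ℝ u p = 0 :=
  ⟨image_eq_zero_of_notMem_tsupport h, by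
    by_contra h2
    exact h (support_fderiv_subset ℝ h2)⟩

lemma intg {u : EE → ℂ} (hc : HasCompactSupport u) {X : Type*} [NormedAddCommGroup X] {G : EE → X}
    (hG : Continuous G) (h0 : ∀ p, u p = 0 → fderiv ℝ u p = 0 → G p = 0) : Integrable G :=
  hG.integrable_of_hasCompactSupport (HasCompactSupport.intro hc fun p hp =>
    h0 p (zero_off hp).1 (zero_off hp).2)

lemma cont_wgt : Continuous wgtP := by
  unfold wgtP
  have := Complex.continuous_normSq
  fun_prop

lemma main_j (u : EE → ℂ) (hu : ContDiff ℝ (⊤ : ℕ∞) u) (hc : HasCompactSupport u) (j : Fin 4) :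
    ∫ p : EE, ‖Lbar j u p‖ ^ 2 * wgtP p = (∫ p : EE, ‖del j u p‖ ^ 2 * wgtP p)
      + (∫ p : EE, ‖u p‖ ^ 2 * wgtP p)
      + eps j * ∫ p : EE, (2 * Complex.I * dxP u p * (starRingEnd ℂ) (u p)).re * wgtP p := by
  have cL := (cd_Lbar j hu)
  have cD := (cd_del j hu)
  have hcc : HasCompactSupport (fun q => (starRingEnd ℂ) (u q)) :=
    HasCompactSupport.intro hc fun p hp => by simp [(zero_off hp).1]
  have z1 := int_Lbar_zero j ((hu.mul (cd_conj cL)).mul cd_wC) ((hc.mul_right).mul_right)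
  have z2 := int_Lbar_zero j ((cD.mul (cd_conj hu)).mul cd_wC) ((hcc.mul_left).mul_right)
  have i1 : Integrable (fun p => Lbar j (fun q => u q * (starRingEnd ℂ) (Lbar j u q) * wC q) p) :=
    intg hc (cd_Lbar j ((hu.mul (cd_conj cL)).mul cd_wC)).continuous (by
      intro p h1 h2
      rw [Lbar_triple j hu cL]
      simp [Lbar, wbarP, dxP, h1, h2])
  have i2 : Integrable (fun p => Lbar j (fun q => del j u q * (starRingEnd ℂ) (u q) * wC q) p) :=
    intg hc (cd_Lbar j ((cD.mul (cd_conj hu)).mul cd_wC)).continuous (by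
      intro p h1 h2
      rw [Lbar_triple j cD hu]
      simp [del, Lhol, wholP, dxP, h1, h2])
  have r1 := integral_re i1
  have r2 := integral_re i2
  change _ = (∫ p, Lbar j (fun q => u q * (starRingEnd ℂ) (Lbar j u q) * wC q) p).re at r1
  change _ = (∫ p, Lbar j (fun q => del j u q * (starRingEnd ℂ) (u q) * wC q) p).re at r2
  rw [z1] at r1
  rw [z2] at r2
  have a1 : Integrable (fun p : EE => ‖del j u p‖ ^ 2 * wgtP p) :=
    intg hc ((cD.continuous.norm.pow 2).mul cont_wgt) (by
      intro p h1 h2; simp [del, Lhol, wholP, dxP, h1, h2])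
  have a2 : Integrable (fun p : EE => ‖u p‖ ^ 2 * wgtP p) :=
    intg hc ((hu.continuous.norm.pow 2).mul cont_wgt) (by
      intro p h1 h2; simp [h1])
  have cdx : Continuous (dxP u) := (cd_fd hu _).continuous
  have a3 : Integrable (fun p : EE =>
      (2 * Complex.I * dxP u p * (starRingEnd ℂ) (u p)).re * wgtP p) :=
    intg hc ((Complex.continuous_re.comp ((continuous_const.mul cdx).mul
      (cd_conj hu).continuous)).mul cont_wgt) (by
      intro p h1 h2; simp [h1])
  rw [← integral_const_mul, ← integral_add a1 a2, 
    ← integral_add (f := fun p : EE => ‖del j u p‖ ^ 2 * wgtP p + ‖u p‖ ^ 2 * wgtP p)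
      (a1.add a2) (a3.const_mul _)]
  have key : ∀ p, ‖Lbar j u p‖ ^ 2 * wgtP p
      = (‖del j u p‖ ^ 2 * wgtP p + ‖u p‖ ^ 2 * wgtP p
        + eps j * ((2 * Complex.I * dxP u p * (starRingEnd ℂ) (u p)).re * wgtP p))
        + ((Lbar j (fun q => u q * (starRingEnd ℂ) (Lbar j u q) * wC q) p).re
        - (Lbar j (fun q => del j u q * (starRingEnd ℂ) (u q) * wC q) p).re) := by
    intro p
    rw [Lbar_triple j hu cL, Lbar_triple j cD hu, Lbar_del j hu, wC_eq]
    simp only [← Complex.normSq_eq_norm_sq, Complex.normSq_apply, Complex.add_re, Complex.mul_re,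
      Complex.conj_re, Complex.conj_im, Complex.ofReal_re, Complex.ofReal_im, Complex.I_re,
      Complex.I_im, Complex.add_im, Complex.mul_im, Complex.re_ofNat, Complex.im_ofNat]
    ring
  rw [integral_congr_ae (Filter.Eventually.of_forall key), integral_add, integral_sub]
  · have q1 : ∫ p, (Lbar j (fun q => u q * (starRingEnd ℂ) (Lbar j u q) * wC q) p).re = 0 := r1
    have q2 : ∫ p, (Lbar j (fun q => del j u q * (starRingEnd ℂ) (u q) * wC q) p).re = 0 := r2
    rw [q1, q2]
    simp
  · exact i1.re
  · exact i2.re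
  · exact (a1.add a2).add (a3.const_mul _)
  · exact i1.re.sub i2.re

theorem tangential_CR_function_estimate
    (u : (Fin 4 → ℂ) × ℝ → ℂ)
    (hu : ContDiff ℝ (⊤ : ℕ∞) u) (hucs : HasCompactSupport u) :
    4 * ∫ p : (Fin 4 → ℂ) × ℝ, ‖u p‖ ^ 2 * wgtP p
      ≤ ∑ j, ∫ p : (Fin 4 → ℂ) × ℝ, ‖Lbar j u p‖ ^ 2 * wgtP p := by
  have hn : ∀ j, 0 ≤ ∫ p : EE, ‖del j u p‖ ^ 2 * wgtP p := fun j =>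
    integral_nonneg fun p => mul_nonneg (sq_nonneg _) (Real.exp_pos _).le
  rw [Fin.sum_univ_four, main_j u hu hucs 0, main_j u hu hucs 1, main_j u hu hucs 2,
    main_j u hu hucs 3]
  have e0 : eps 0 = -1 := rfl
  have e1 : eps 1 = -1 := rfl
  have e2 : eps 2 = 1 := rfl
  have e3 : eps 3 = 1 := rfl
  rw [e0, e1, e2, e3]
  linarith [hn 0, hn 1, hn 2, hn 3]
end
end

section
/- Let n ≥ 1, let λ : Fin n → ℝ, and for smooth functions v : ℂⁿ → ℂ define ∂̄_j v = ∂v/∂z̄_j + λ_j z_j v. Fix an index k and suppose there exist indices r, s, both different from k, such that λ_r < 0 and λ_s > 0. Then for every smooth compactly supported v : ℂⁿ → ℂ, ∑_{j ≠ k} ∫_{ℂⁿ} |∂̄_j v|² e^{|z|²} dλ(z) ≥ ∫_{ℂⁿ} |v|² e^{|z|²} dλ(z). -/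
open MeasureTheory Complex Finset

noncomputable section

section helpers

variable {n : ℕ}

lemma hld_mul {f g : (Fin n → ℂ) → ℂ} {f' g' : ℂ} {z e : Fin n → ℂ}
    (hf : HasLineDerivAt ℝ f f' z e) (hg : HasLineDerivAt ℝ g g' z e) :
    HasLineDerivAt ℝ (fun z => f z * g z) (f' * g z + f z * g') z e := by
  have h := HasDerivAt.mul hf hg
  simp only [zero_smul, add_zero] at h
  exact h

lemma hld_add {f g : (Fin n → ℂ) → ℂ} {f' g' : ℂ} {z e : Fin n → ℂ}
    (hf : HasLineDerivAt ℝ f f' z e) (hg : HasLineDerivAt ℝ g g' z e) :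
    HasLineDerivAt ℝ (fun z => f z + g z) (f' + g') z e := by
  exact HasDerivAt.add hf hg

lemma hld_const (c : ℂ) {z e : Fin n → ℂ} :
    HasLineDerivAt ℝ (fun _ : Fin n → ℂ => c) 0 z e := by
  exact hasDerivAt_const _ _

lemma hld_conj {f : (Fin n → ℂ) → ℂ} {f' : ℂ} {z e : Fin n → ℂ}
    (hf : HasLineDerivAt ℝ f f' z e) :
    HasLineDerivAt ℝ (fun z => (starRingEnd ℂ) (f z)) ((starRingEnd ℂ) f') z e := by
  exact HasDerivAt.star hf

lemma hld_coord (j : Fin n) (z e : Fin n → ℂ) :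
    HasLineDerivAt ℝ (fun z : Fin n → ℂ => z j) (e j) z e := by
  unfold HasLineDerivAt
  have h := ((hasDerivAt_id (0:ℝ)).smul_const (e j)).const_add (z j)
  simpa using h

lemma hld_fderiv {f : (Fin n → ℂ) → ℂ} (hf : Differentiable ℝ f) (z e : Fin n → ℂ) :
    HasLineDerivAt ℝ f (fderiv ℝ f z e) z e :=
  (hf z).hasFDerivAt.hasLineDerivAt e

lemma contDiff_wgt : ContDiff ℝ (⊤ : ℕ∞) (fun z : Fin n → ℂ => ((wgt z : ℝ) : ℂ)) := by
  have h : ContDiff ℝ (⊤ : ℕ∞) (fun z : Fin n → ℂ => wgt z) := by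
    unfold wgt
    apply ContDiff.exp
    apply ContDiff.sum
    intro i _
    simp only [Complex.normSq_apply]
    have h1 : ContDiff ℝ (⊤ : ℕ∞) (fun z : Fin n → ℂ => (z i).re) :=
      Complex.reCLM.contDiff.comp (contDiff_apply ℝ ℂ i)
    have h2 : ContDiff ℝ (⊤ : ℕ∞) (fun z : Fin n → ℂ => (z i).im) :=
      Complex.imCLM.contDiff.comp (contDiff_apply ℝ ℂ i)
    exact (h1.mul h1).add (h2.mul h2)
  exact Complex.ofRealCLM.contDiff.comp h

lemma hld_wgt (j : Fin n) (c : ℂ) (z : Fin n → ℂ) :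
    HasLineDerivAt ℝ (fun z : Fin n → ℂ => ((wgt z : ℝ) : ℂ))
      ((wgt z : ℂ) * (c * (starRingEnd ℂ) (z j) + (starRingEnd ℂ) c * z j)) z (Pi.single j c) := by
  have h1 : ∀ i, HasDerivAt
      (fun t : ℝ => Complex.normSq ((z + t • (Pi.single j c : Fin n → ℂ)) i))
      (2 * (((Pi.single j c : Fin n → ℂ) i).re * (z i).re
        + ((Pi.single j c : Fin n → ℂ) i).im * (z i).im)) 0 := by
    intro i
    generalize (Pi.single j c : Fin n → ℂ) = e
    have ha : HasDerivAt (fun t : ℝ => (z i).re + t * (e i).re) (e i).re 0 := by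
      simpa using ((hasDerivAt_id (0:ℝ)).mul_const (e i).re).const_add (z i).re
    have hb : HasDerivAt (fun t : ℝ => (z i).im + t * (e i).im) (e i).im 0 := by
      simpa using ((hasDerivAt_id (0:ℝ)).mul_const (e i).im).const_add (z i).im
    have := (ha.mul ha).add (hb.mul hb)
    convert! this using 1
    · ext t; simp [Complex.normSq_apply]
    · simp; ring
  have h2 := (HasDerivAt.fun_sum (u := Finset.univ) (fun i _ => h1 i)).exp.ofReal_comp
  unfold HasLineDerivAt
  convert! h2 using 1
  have hs : ∑ i, 2 * (((Pi.single j c : Fin n → ℂ) i).re * (z i).re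
        + ((Pi.single j c : Fin n → ℂ) i).im * (z i).im)
      = 2 * (c.re * (z j).re + c.im * (z j).im) := by
    rw [Finset.sum_eq_single j]
    · simp
    · intro b _ hb
      simp [hb]
    · simp
  rw [hs, zero_smul, add_zero, Complex.ofReal_mul]
  unfold wgt
  congr 1
  apply Complex.ext <;> simp <;> ring

lemma integral_dd_zero {f : (Fin n → ℂ) → ℂ} (hf : ContDiff ℝ (⊤ : ℕ∞) f)
    (hc : HasCompactSupport f) (e : Fin n → ℂ) :
    Integrable (fun z => fderiv ℝ f z e) ∧ ∫ z, fderiv ℝ f z e = 0 := by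
  have hd : Continuous (fun z => fderiv ℝ f z e) :=
    (hf.continuous_fderiv (by simp)).clm_apply continuous_const
  have hcs : HasCompactSupport (fun z => fderiv ℝ f z e) := by
    have := hc.fderiv (𝕜 := ℝ)
    exact this.comp_left (g := fun L : (Fin n → ℂ) →L[ℝ] ℂ => L e) (by simp)
  have hi := hd.integrable_of_hasCompactSupport hcs (μ := volume)
  refine ⟨hi, ?_⟩
  have := integral_mul_fderiv_eq_neg_fderiv_mul_of_integrable (μ := (volume : Measure (Fin n → ℂ)))
    (f := fun _ : Fin n → ℂ => (1:ℂ)) (g := f) (v := e) (by simp) (by simpa using hi)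
    (by simpa using hf.continuous.integrable_of_hasCompactSupport hc)
    (fun x _ => differentiableAt_const _) (fun x _ => (hf.differentiable (by simp)) x)
  simpa using this

lemma contDiff_dd {f : (Fin n → ℂ) → ℂ} (hf : ContDiff ℝ (⊤ : ℕ∞) f) (e : Fin n → ℂ) :
    ContDiff ℝ (⊤ : ℕ∞) (fun z => fderiv ℝ f z e) :=
  (hf.fderiv_right (m := (⊤ : ℕ∞)) (by simp)).clm_apply contDiff_const

lemma dd_symm {f : (Fin n → ℂ) → ℂ} (hf : ContDiff ℝ (⊤ : ℕ∞) f) (e e' z : Fin n → ℂ) :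
    fderiv ℝ (fun z => fderiv ℝ f z e) z e' = fderiv ℝ (fun z => fderiv ℝ f z e') z e := by
  have h := (hf.contDiffAt (x := z)).isSymmSndFDerivAt (by
    simp only [minSmoothness_of_isRCLikeNormedField]
    exact WithTop.coe_le_coe.2 (le_top : (2 : ℕ∞) ≤ ⊤))
  have hd : DifferentiableAt ℝ (fderiv ℝ f) z :=
    (hf.fderiv_right (m := (⊤ : ℕ∞)) (by simp)).differentiable (by simp) z
  rw [fderiv_clm_apply hd (differentiableAt_const _), fderiv_clm_apply hd (differentiableAt_const _)]
  simpa using h e' e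

lemma contDiff_conj {f : (Fin n → ℂ) → ℂ} (hf : ContDiff ℝ (⊤ : ℕ∞) f) :
    ContDiff ℝ (⊤ : ℕ∞) (fun z => (starRingEnd ℂ) (f z)) :=
  Complex.conjCLE.contDiff.comp hf

lemma contDiff_dbarOp (lam : Fin n → ℝ) (j : Fin n) {v : (Fin n → ℂ) → ℂ}
    (hv : ContDiff ℝ (⊤ : ℕ∞) v) : ContDiff ℝ (⊤ : ℕ∞) (dbarOp lam j v) := by
  unfold dbarOp wbar
  exact (contDiff_const.mul ((contDiff_dd hv _).add (contDiff_const.mul (contDiff_dd hv _)))).add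
    ((contDiff_const.mul (contDiff_apply ℝ ℂ j)).mul hv)

lemma contDiff_deltaOp (lam : Fin n → ℝ) (j : Fin n) {v : (Fin n → ℂ) → ℂ}
    (hv : ContDiff ℝ (⊤ : ℕ∞) v) : ContDiff ℝ (⊤ : ℕ∞) (deltaOp lam j v) := by
  unfold deltaOp whol
  have hz := contDiff_conj (contDiff_apply ℝ ℂ (n := (⊤ : ℕ∞)) j)
  exact ((contDiff_const.mul ((contDiff_dd hv _).sub (contDiff_const.mul (contDiff_dd hv _)))).neg.add
    ((contDiff_const.mul hz).mul hv)).sub (hz.mul hv)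

lemma hld_dbarOp (lam : Fin n → ℝ) (j : Fin n) {v : (Fin n → ℂ) → ℂ}
    (hv : ContDiff ℝ (⊤ : ℕ∞) v) (z e : Fin n → ℂ) :
    HasLineDerivAt ℝ (dbarOp lam j v)
      ((1/2:ℂ) * (fderiv ℝ (fun z => fderiv ℝ v z (Pi.single j 1)) z e
        + Complex.I * fderiv ℝ (fun z => fderiv ℝ v z (Pi.single j Complex.I)) z e)
        + lam j * (e j * v z + z j * fderiv ℝ v z e)) z e := by
  have hA := hld_fderiv ((contDiff_dd hv (Pi.single j 1)).differentiable (by simp)) z e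
  have hB := hld_fderiv ((contDiff_dd hv (Pi.single j Complex.I)).differentiable (by simp)) z e
  have hV := hld_fderiv (hv.differentiable (by simp)) z e
  have := hld_add (hld_mul (hld_const (1/2:ℂ)) (hld_add hA (hld_mul (hld_const Complex.I) hB)))
    (hld_mul (hld_mul (hld_const (lam j : ℂ)) (hld_coord j z e)) hV)
  convert! this using 1
  ring

lemma hld_deltaOp (lam : Fin n → ℝ) (j : Fin n) {v : (Fin n → ℂ) → ℂ}
    (hv : ContDiff ℝ (⊤ : ℕ∞) v) (z e : Fin n → ℂ) :
    HasLineDerivAt ℝ (deltaOp lam j v)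
      (-((1/2:ℂ) * (fderiv ℝ (fun z => fderiv ℝ v z (Pi.single j 1)) z e
        - Complex.I * fderiv ℝ (fun z => fderiv ℝ v z (Pi.single j Complex.I)) z e))
        + (lam j - 1) * ((starRingEnd ℂ) (e j) * v z + (starRingEnd ℂ) (z j) * fderiv ℝ v z e))
      z e := by
  have hA := hld_fderiv ((contDiff_dd hv (Pi.single j 1)).differentiable (by simp)) z e
  have hB := hld_fderiv ((contDiff_dd hv (Pi.single j Complex.I)).differentiable (by simp)) z e
  have hV := hld_fderiv (hv.differentiable (by simp)) z e
  have := hld_add (hld_mul (hld_const (-1/2:ℂ)) (hld_add hA (hld_mul (hld_const (-Complex.I)) hB)))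
    (hld_mul (hld_mul (hld_const (lam j - 1 : ℂ)) (hld_conj (hld_coord j z e))) hV)
  convert! this using 1
  · ext z; simp only [deltaOp, whol]; ring
  · ring

lemma key_pointwise (lam : Fin n → ℝ) (j : Fin n) {v : (Fin n → ℂ) → ℂ}
    (hv : ContDiff ℝ (⊤ : ℕ∞) v) (z : Fin n → ℂ)
    (G H : (Fin n → ℂ) → ℂ)
    (hG : G = fun z => (starRingEnd ℂ) (v z) * dbarOp lam j v z * (wgt z : ℂ))
    (hH : H = fun z => (starRingEnd ℂ) (v z) * deltaOp lam j v z * (wgt z : ℂ))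
    (hGd : Differentiable ℝ G) (hHd : Differentiable ℝ H) :
    ((‖dbarOp lam j v z‖ ^ 2 * wgt z - ‖deltaOp lam j v z‖ ^ 2 * wgt z
      - (1 - 2 * lam j) * (‖v z‖ ^ 2 * wgt z) : ℝ) : ℂ)
    = (1/2:ℂ) * (fderiv ℝ G z (Pi.single j 1) - Complex.I * fderiv ℝ G z (Pi.single j Complex.I))
      + (1/2:ℂ) * (fderiv ℝ H z (Pi.single j 1)
        + Complex.I * fderiv ℝ H z (Pi.single j Complex.I)) := by
  have hV : ∀ e, HasLineDerivAt ℝ v (fderiv ℝ v z e) z e :=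
    fun e => hld_fderiv (hv.differentiable (by simp)) z e
  have eG : ∀ c : ℂ, _ := fun c => (hld_fderiv hGd z (Pi.single j c)).unique
    (hG ▸ hld_mul (hld_mul (hld_conj (hV (Pi.single j c))) (hld_dbarOp lam j hv z (Pi.single j c)))
      (hld_wgt j c z))
  have eH : ∀ c : ℂ, _ := fun c => (hld_fderiv hHd z (Pi.single j c)).unique
    (hH ▸ hld_mul (hld_mul (hld_conj (hV (Pi.single j c))) (hld_deltaOp lam j hv z (Pi.single j c)))
      (hld_wgt j c z))
  rw [eG 1, eG Complex.I, eH 1, eH Complex.I, dd_symm hv (Pi.single j 1) (Pi.single j Complex.I)]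
  push_cast
  simp only [← Complex.mul_conj', dbarOp, deltaOp, wbar, whol, Pi.single_eq_same]
  generalize fderiv ℝ (fun z => fderiv ℝ v z (Pi.single j 1)) z (Pi.single j 1) = A1
  generalize fderiv ℝ (fun z => fderiv ℝ v z (Pi.single j Complex.I)) z (Pi.single j 1) = C
  generalize fderiv ℝ (fun z => fderiv ℝ v z (Pi.single j Complex.I)) z (Pi.single j Complex.I) = B2
  generalize fderiv ℝ v z (Pi.single j 1) = A
  generalize fderiv ℝ v z (Pi.single j Complex.I) = B
  simp only [map_add, map_sub, map_mul, map_neg, Complex.conj_I, Complex.conj_ofReal, map_one,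
    Complex.conj_conj, map_div₀, map_ofNat]
  have hI := Complex.I_sq
  generalize Complex.I = i at *
  generalize (starRingEnd ℂ) A = A'
  generalize (starRingEnd ℂ) B = B'
  generalize (starRingEnd ℂ) (z j) = z'
  generalize (starRingEnd ℂ) (v z) = v'
  ring_nf
  simp only [hI]
  ring

lemma int_aux {f : (Fin n → ℂ) → ℂ} (hf : Continuous f) (hc : HasCompactSupport f) :
    Integrable (fun z => ‖f z‖ ^ 2 * wgt z) := by
  have hw : Continuous (fun z : Fin n → ℂ => wgt z) := by
    have := Complex.continuous_re.comp (contDiff_wgt (n := n)).continuous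
    simpa [Function.comp_def] using this
  apply Continuous.integrable_of_hasCompactSupport
  · exact (hf.norm.pow 2).mul hw
  · exact (hc.comp_left (g := fun x : ℂ => ‖x‖ ^ 2) (by simp)).mul_right

lemma hcs_dd {v : (Fin n → ℂ) → ℂ} (hc : HasCompactSupport v) (e : Fin n → ℂ) :
    HasCompactSupport (fun z => fderiv ℝ v z e) :=
  (hc.fderiv (𝕜 := ℝ)).comp_left (g := fun L : (Fin n → ℂ) →L[ℝ] ℂ => L e) (by simp)

lemma hcs_dbarOp (lam : Fin n → ℝ) (j : Fin n) {v : (Fin n → ℂ) → ℂ}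
    (hc : HasCompactSupport v) : HasCompactSupport (dbarOp lam j v) := by
  unfold dbarOp wbar
  exact (((hcs_dd hc _).add ((hcs_dd hc _).mul_left)).mul_left).add hc.mul_left

lemma hcs_deltaOp (lam : Fin n → ℝ) (j : Fin n) {v : (Fin n → ℂ) → ℂ}
    (hc : HasCompactSupport v) : HasCompactSupport (deltaOp lam j v) := by
  unfold deltaOp whol
  exact ((((hcs_dd hc _).sub ((hcs_dd hc _).mul_left)).mul_left).neg.add hc.mul_left).sub
    hc.mul_left

lemma key_identity (lam : Fin n → ℝ) (j : Fin n) {v : (Fin n → ℂ) → ℂ}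
    (hv : ContDiff ℝ (⊤ : ℕ∞) v) (hc : HasCompactSupport v) :
    ∫ z, ‖dbarOp lam j v z‖ ^ 2 * wgt z = (∫ z, ‖deltaOp lam j v z‖ ^ 2 * wgt z)
      + (1 - 2 * lam j) * ∫ z, ‖v z‖ ^ 2 * wgt z := by
  obtain ⟨G, hG⟩ : ∃ G : (Fin n → ℂ) → ℂ,
    G = fun z => (starRingEnd ℂ) (v z) * dbarOp lam j v z * (wgt z : ℂ) := ⟨_, rfl⟩
  obtain ⟨H, hH⟩ : ∃ H : (Fin n → ℂ) → ℂ,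
    H = fun z => (starRingEnd ℂ) (v z) * deltaOp lam j v z * (wgt z : ℂ) := ⟨_, rfl⟩
  have hGc : ContDiff ℝ (⊤ : ℕ∞) G := by
    rw [hG]; exact ((contDiff_conj hv).mul (contDiff_dbarOp lam j hv)).mul contDiff_wgt
  have hHc : ContDiff ℝ (⊤ : ℕ∞) H := by
    rw [hH]; exact ((contDiff_conj hv).mul (contDiff_deltaOp lam j hv)).mul contDiff_wgt
  have hGs : HasCompactSupport G := by
    rw [hG]; exact ((hcs_dbarOp lam j hc).mul_left).mul_right
  have hHs : HasCompactSupport H := by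
    rw [hH]; exact ((hcs_deltaOp lam j hc).mul_left).mul_right
  have hp := fun z => key_pointwise lam j hv z G H hG hH (hGc.differentiable (by simp))
    (hHc.differentiable (by simp))
  obtain ⟨g1, g1'⟩ := integral_dd_zero hGc hGs (Pi.single j 1)
  obtain ⟨g2, g2'⟩ := integral_dd_zero hGc hGs (Pi.single j Complex.I)
  obtain ⟨h1, h1'⟩ := integral_dd_zero hHc hHs (Pi.single j 1)
  obtain ⟨h2, h2'⟩ := integral_dd_zero hHc hHs (Pi.single j Complex.I)
  have hz := integral_congr_ae (μ := volume) (Filter.Eventually.of_forall hp)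
  have e1 : Integrable (fun z => (1/2:ℂ) * (fderiv ℝ G z (Pi.single j 1)
      - Complex.I * fderiv ℝ G z (Pi.single j Complex.I))) :=
    (g1.sub (g2.const_mul _)).const_mul _
  have e2 : Integrable (fun z => (1/2:ℂ) * (fderiv ℝ H z (Pi.single j 1)
      + Complex.I * fderiv ℝ H z (Pi.single j Complex.I))) :=
    (h1.add (h2.const_mul _)).const_mul _
  rw [integral_add e1 e2, integral_const_mul, integral_const_mul,
    integral_sub g1 (g2.const_mul _), integral_add h1 (h2.const_mul _), integral_const_mul,
    integral_const_mul, g1', g2', h1', h2'] at hz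
  have hz' : ∫ z, (‖dbarOp lam j v z‖ ^ 2 * wgt z - ‖deltaOp lam j v z‖ ^ 2 * wgt z
      - (1 - 2 * lam j) * (‖v z‖ ^ 2 * wgt z)) = 0 := by
    have h0 : ((0:ℂ)) = ((0:ℝ):ℂ) := by simp
    simp only [mul_zero, sub_zero, add_zero] at hz
    exact Complex.ofReal_injective (integral_ofReal.symm.trans (hz.trans h0))
  have i1 := int_aux (contDiff_dbarOp lam j hv).continuous (hcs_dbarOp lam j hc)
  have i2 := int_aux (contDiff_deltaOp lam j hv).continuous (hcs_deltaOp lam j hc)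
  have i3 := int_aux hv.continuous hc
  have i12 : Integrable (fun z => ‖dbarOp lam j v z‖ ^ 2 * wgt z
      - ‖deltaOp lam j v z‖ ^ 2 * wgt z) := i1.sub i2
  rw [integral_sub i12 (i3.const_mul _), integral_sub i1 i2, integral_const_mul] at hz'
  linarith

end helpers

theorem estimate_off_k_general (n : ℕ) (hn : 1 ≤ n) (lam : Fin n → ℝ) (k : Fin n)
    (r s : Fin n) (hr : r ≠ k) (hs : s ≠ k) (hlr : lam r < 0) (hls : 0 < lam s)
    (v : (Fin n → ℂ) → ℂ) (hv : ContDiff ℝ (⊤ : ℕ∞) v) (hvcs : HasCompactSupport v) :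
    ∫ z : Fin n → ℂ, ‖v z‖ ^ 2 * wgt z
      ≤ ∑ j ∈ Finset.univ.erase k, ∫ z : Fin n → ℂ, ‖dbarOp lam j v z‖ ^ 2 * wgt z := by
  have hnn : ∀ f : (Fin n → ℂ) → ℂ, 0 ≤ ∫ z, ‖f z‖ ^ 2 * wgt z := fun f =>
    integral_nonneg fun z => mul_nonneg (by positivity) (Real.exp_pos _).le
  have h1 := Finset.single_le_sum (s := Finset.univ.erase k)
    (f := fun j => ∫ z : Fin n → ℂ, ‖dbarOp lam j v z‖ ^ 2 * wgt z)
    (fun j _ => hnn (dbarOp lam j v)) (Finset.mem_erase.2 ⟨hr, Finset.mem_univ r⟩)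
  refine le_trans ?_ h1
  have h2 := key_identity lam r hv hvcs
  have h3 := hnn (deltaOp lam r v)
  have h4 := hnn v
  rw [h2]
  nlinarith [mul_nonneg (neg_nonneg.2 hlr.le) h4]
end
end
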